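/- Fourth-order three-body error term (paper eq. A18c): for pairwise distinct indices i, j, k and any phase-space point (x,p) with r_ij ≠ 0 and r_ik ≠ 0, the left-nested canonical Poisson bracket satisfies {{{{V_ij, T}, V_ij}, T}, V_ik}(x,p) = −4 (G³ (m i)(m j)(m k)((m i)+(m j)) / (r_ij⁶ r_ik³)) · (x_ij · x_ik). -/

import Mathlib

open scoped RealInnerProductSpace BigOperators

noncomputable section

/-- Three-dimensional Euclidean space. -/
abbrev E3 : Type := EuclideanSpace ℝ (Fin 3)

/-- Phase space for `N` particles: positions and momenta. -/
abbrev Phase (N : ℕ) : Type := (Fin N → E3) × (Fin N → E3)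

/-- Gradient of a phase-space function with respect to the `k`-th position. -/
def gradPos {N : ℕ} (A : Phase N → ℝ) (k : Fin N) (w : Phase N) : E3 :=
  gradient (fun y => A (Function.update w.1 k y, w.2)) (w.1 k)

/-- Gradient of a phase-space function with respect to the `k`-th momentum. -/
def gradMom {N : ℕ} (A : Phase N → ℝ) (k : Fin N) (w : Phase N) : E3 :=
  gradient (fun y => A (w.1, Function.update w.2 k y)) (w.2 k)

/-- Canonical Poisson bracket of two phase-space functions. -/
def poisson {N : ℕ} (A B : Phase N → ℝ) (w : Phase N) : ℝ :=
  ∑ k, (⟪gradPos A k w, gradMom B k w⟫ - ⟪gradMom A k w, gradPos B k w⟫)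

/-- Kinetic energy `T = Σ_i ‖p_i‖²/(2 m_i)`. -/
def kinetic {N : ℕ} (m : Fin N → ℝ) (w : Phase N) : ℝ :=
  ∑ i, ‖w.2 i‖ ^ 2 / (2 * m i)

/-- Pair potential `V_ij = −G m_i m_j / ‖x_i − x_j‖`. -/
def pairPot {N : ℕ} (G : ℝ) (m : Fin N → ℝ) (i j : Fin N) (w : Phase N) : ℝ :=
  -(G * m i * m j) / ‖w.1 i - w.1 j‖

open Filter Topology

/-!
For a central pair potential `f(r_ij)`, the bracket with `T` is the derivative along the free flow,
`f'(r_ij) / r_ij * (x_ij · v_ij)`. This is linear in the momenta, so bracketing it with a function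
of the positions removes them again; with `f(r_ij)` itself the result is
`-(1 / m_i + 1 / m_j) * f'(r_ij) ^ 2`, another central function of the same pair, and the two
computations can be repeated. In the last bracket, with a potential `g(r_ik)`, only the
shared particle `i` contributes.
-/

section Deriv

variable {𝕜 : Type*} [NontriviallyNormedField 𝕜] {r : 𝕜}

lemma hasDerivAt_const_div_pow (c : 𝕜) (n : ℕ)
    (hr : r ≠ 0) : HasDerivAt (fun s ↦ c / s ^ n) (-(n * c) / r ^ (n + 1)) r := by
  have hinv := ((hasDerivAt_pow n r).fun_inv (pow_ne_zero n hr)).const_mul c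
  simp only [← div_eq_mul_inv] at hinv
  refine hinv.congr_deriv ?_
  rcases n with _ | n
  · simp
  · rw [Nat.add_sub_cancel]
    field_simp
    ring

lemma hasDerivAt_neg_const_div (c : 𝕜) (hr : r ≠ 0) :
    HasDerivAt (fun s ↦ -c / s) (c / r ^ 2) r := by
  simpa using hasDerivAt_const_div_pow (-c) 1 hr

lemma hasDerivAt_const_div_sq (c : 𝕜) (hr : r ≠ 0) :
    HasDerivAt (fun s ↦ c / s ^ 2) (-(2 * c) / r ^ 3) r :=
  mod_cast hasDerivAt_const_div_pow c 2 hr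

end Deriv

section Gradient

variable {E : Type*} [NormedAddCommGroup E] [InnerProductSpace ℝ E] [CompleteSpace E]

lemma hasGradientAt_norm_sq (u : E) : HasGradientAt (fun y ↦ ‖y‖ ^ 2) ((2 : ℝ) • u) u := by
  rw [hasGradientAt_iff_hasFDerivAt]
  refine (hasStrictFDerivAt_norm_sq u).hasFDerivAt.congr_fderiv ?_
  ext v
  simp

lemma hasGradientAt_inner_right (u y : E) : HasGradientAt (fun z ↦ ⟪u, z⟫) u y := by
  rw [hasGradientAt_iff_hasFDerivAt]
  exact (innerSL ℝ u).hasFDerivAt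

lemma hasDerivAt_comp_hasGradientAt {φ : ℝ → ℝ} {φ' : ℝ} {g : E → ℝ} {g' u : E}
    (hφ : HasDerivAt φ φ' (g u)) (hg : HasGradientAt g g' u) :
    HasGradientAt (fun y ↦ φ (g y)) (φ' • g') u := by
  rw [hasGradientAt_iff_hasFDerivAt] at hg ⊢
  refine (hφ.comp_hasFDerivAt u hg).congr_fderiv ?_
  simp

lemma hasGradientAt_norm {u : E} (hu : u ≠ 0) : HasGradientAt (‖·‖) (‖u‖⁻¹ • u) u := by
  have hsqrt := Real.hasDerivAt_sqrt (pow_ne_zero 2 (norm_ne_zero_iff.mpr hu))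
  have hcomp := hasDerivAt_comp_hasGradientAt (g := fun y : E ↦ ‖y‖ ^ 2) hsqrt
    (hasGradientAt_norm_sq u)
  simpa [Real.sqrt_sq, smul_smul, mul_comm, mul_left_comm] using hcomp

lemma hasGradientAt_comp_norm {f : ℝ → ℝ} {f' : ℝ} {u : E} (hu : u ≠ 0)
    (hf : HasDerivAt f f' ‖u‖) : HasGradientAt (fun y ↦ f ‖y‖) ((f' / ‖u‖) • u) u := by
  simpa [smul_smul, div_eq_mul_inv] using hasDerivAt_comp_hasGradientAt hf (hasGradientAt_norm hu)

lemma hasGradientAt_comp_add_smul_sub {g : E → ℝ} {g' a : E} (hg : HasGradientAt g g' a)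
    (c : ℝ) (b : E) : HasGradientAt (fun y ↦ g (a + c • (y - b))) (c • g') b := by
  have haff : HasFDerivAt (fun y ↦ a + c • (y - b)) (c • ContinuousLinearMap.id ℝ E) b :=
    (((hasFDerivAt_id b).sub_const b).fun_const_smul c).const_add a
  rw [hasGradientAt_iff_hasFDerivAt] at hg ⊢
  have hg' : HasFDerivAt g (InnerProductSpace.toDual ℝ E g') (a + c • (b - b)) := by simpa using hg
  refine (hg'.comp b haff).congr_fderiv ?_
  ext v
  simp

end Gradient

section PairSign

variable {ι : Type*} [DecidableEq ι]

/-- The derivative of `x i - x j` with respect to `x l`, as a scalar function of `l`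
(identically `0` if `i = j`). It lets one formula give the gradient of a function of
`x i - x j` in every particle `l`. -/
def pairSign (i j : ι) : ι → ℝ :=
  Pi.single i 1 - Pi.single j 1

lemma update_sub_update {E : Type*} [AddCommGroup E] [Module ℝ E] (x : ι → E) (i j l : ι) (y : E) :
    Function.update x l y i - Function.update x l y j =
      x i - x j + pairSign i j l • (y - x l) := by
  have hupdate (a : ι) :
      Function.update x l y a = x a + (Pi.single a 1 : ι → ℝ) l • (y - x l) := by
    rcases eq_or_ne a l with rfl | h
    · simp
    · simp [h, h.symm]
  rw [hupdate, hupdate, pairSign, Pi.sub_apply, sub_smul]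
  abel

lemma sum_pairSign_mul [Fintype ι] (i j : ι) (f : ι → ℝ) :
    ∑ l, pairSign i j l * f l = f i - f j := by
  simp [pairSign, Pi.single_apply, sub_mul]

end PairSign

section PhaseSpace

variable {N : ℕ}

/-- The potential `f(r_ij)` of a central interaction between particles `i` and `j`. -/
def centralPot (f : ℝ → ℝ) (i j : Fin N) (w : Phase N) : ℝ :=
  f ‖w.1 i - w.1 j‖

/-- The relative velocity `v_ij`. -/
def relVel (m : Fin N → ℝ) (i j : Fin N) (w : Phase N) : E3 :=
  (m i)⁻¹ • w.2 i - (m j)⁻¹ • w.2 j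

/-- The observable `a(r_ij) * (x_ij · v_ij)`, the form taken by the bracket of a central potential
with the kinetic energy. -/
def radialVel (m : Fin N → ℝ) (a : ℝ → ℝ) (i j : Fin N) (w : Phase N) : ℝ :=
  a ‖w.1 i - w.1 j‖ * ⟪w.1 i - w.1 j, relVel m i j w⟫

lemma gradPos_congr {A B : Phase N → ℝ} {w : Phase N} (h : A =ᶠ[𝓝 w] B) (l : Fin N) :
    gradPos A l w = gradPos B l w := by
  have hcont : Continuous fun y : E3 ↦ ((Function.update w.1 l y, w.2) : Phase N) := by fun_prop
  have htendsto := hcont.tendsto (w.1 l)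
  rw [Function.update_eq_self] at htendsto
  exact (h.comp_tendsto htendsto).gradient_eq

lemma gradMom_congr {A B : Phase N → ℝ} {w : Phase N} (h : A =ᶠ[𝓝 w] B) (l : Fin N) :
    gradMom A l w = gradMom B l w := by
  have hcont : Continuous fun y : E3 ↦ ((w.1, Function.update w.2 l y) : Phase N) := by fun_prop
  have htendsto := hcont.tendsto (w.2 l)
  rw [Function.update_eq_self] at htendsto
  exact (h.comp_tendsto htendsto).gradient_eq

lemma poisson_congr_left {A B : Phase N → ℝ} {w : Phase N} (h : A =ᶠ[𝓝 w] B)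
    (F : Phase N → ℝ) : poisson A F w = poisson B F w := by
  simp only [poisson, gradPos_congr h, gradMom_congr h]

lemma poisson_eventuallyEq_left {A B : Phase N → ℝ} {w : Phase N} (h : A =ᶠ[𝓝 w] B)
    (F : Phase N → ℝ) : poisson A F =ᶠ[𝓝 w] poisson B F :=
  h.eventuallyEq_nhds.mono fun _ hz ↦ poisson_congr_left hz F

lemma gradPos_kinetic (m : Fin N → ℝ) (l : Fin N) (w : Phase N) :
    gradPos (kinetic m) l w = 0 := by
  simp [gradPos, kinetic]

lemma kinetic_update (m : Fin N → ℝ) (l : Fin N) (w : Phase N) (y : E3) :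
    kinetic m (w.1, Function.update w.2 l y) =
      ‖y‖ ^ 2 / (2 * m l) + ∑ a ∈ Finset.univ \ {l}, ‖w.2 a‖ ^ 2 / (2 * m a) := by
  simp only [kinetic, Function.apply_update (fun a (q : E3) ↦ ‖q‖ ^ 2 / (2 * m a))]
  exact Finset.sum_update_of_mem (Finset.mem_univ l) _ _

lemma gradMom_kinetic (m : Fin N → ℝ) (l : Fin N) (w : Phase N) :
    gradMom (kinetic m) l w = (m l)⁻¹ • w.2 l := by
  have haff (t b : ℝ) : HasDerivAt (fun s ↦ s / (2 * m l) + b) (1 / (2 * m l)) t :=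
    ((hasDerivAt_id t).div_const _).add_const b
  simp only [gradMom, kinetic_update]
  rw [(hasDerivAt_comp_hasGradientAt (haff _ _) (hasGradientAt_norm_sq (w.2 l))).gradient,
    smul_smul]
  congr 1
  ring

lemma gradMom_centralPot (f : ℝ → ℝ) (i j l : Fin N) (w : Phase N) :
    gradMom (centralPot f i j) l w = 0 := by
  simp [gradMom, centralPot]

lemma gradPos_centralPot {f : ℝ → ℝ} {f' : ℝ} {i j : Fin N} {w : Phase N} (hw : w.1 i ≠ w.1 j)
    (hf : HasDerivAt f f' ‖w.1 i - w.1 j‖) (l : Fin N) :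
    gradPos (centralPot f i j) l w =
      pairSign i j l • (f' / ‖w.1 i - w.1 j‖) • (w.1 i - w.1 j) := by
  simp only [gradPos, centralPot, update_sub_update]
  exact (hasGradientAt_comp_add_smul_sub
    (hasGradientAt_comp_norm (sub_ne_zero.mpr hw) hf) _ _).gradient

lemma relVel_update (m : Fin N → ℝ) (i j l : Fin N) (w : Phase N) (y : E3) :
    relVel m i j (w.1, Function.update w.2 l y) =
      relVel m i j w + (pairSign i j l * (m l)⁻¹) • (y - w.2 l) := by
  simp only [relVel, Function.apply_update (fun a (q : E3) ↦ (m a)⁻¹ • q), update_sub_update,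
    mul_smul, smul_sub]

lemma gradMom_radialVel (m : Fin N → ℝ) (a : ℝ → ℝ) (i j l : Fin N) (w : Phase N) :
    gradMom (radialVel m a i j) l w =
      (pairSign i j l * (m l)⁻¹) • a ‖w.1 i - w.1 j‖ • (w.1 i - w.1 j) := by
  have hlin (y : E3) : radialVel m a i j (w.1, Function.update w.2 l y) =
      ⟪a ‖w.1 i - w.1 j‖ • (w.1 i - w.1 j),
        relVel m i j w + (pairSign i j l * (m l)⁻¹) • (y - w.2 l)⟫ := by
    rw [radialVel, relVel_update, real_inner_smul_left]
  simp only [gradMom, hlin]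
  exact (hasGradientAt_comp_add_smul_sub (hasGradientAt_inner_right _ _) _ _).gradient

lemma poisson_kinetic (A : Phase N → ℝ) (m : Fin N → ℝ) (w : Phase N) :
    poisson A (kinetic m) w = ∑ l, ⟪gradPos A l w, (m l)⁻¹ • w.2 l⟫ := by
  simp [poisson, gradPos_kinetic, gradMom_kinetic]

lemma poisson_centralPot (A : Phase N → ℝ) (g : ℝ → ℝ) (i j : Fin N) (w : Phase N) :
    poisson A (centralPot g i j) w = -∑ l, ⟪gradMom A l w, gradPos (centralPot g i j) l w⟫ := by
  simp [poisson, gradMom_centralPot]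

lemma poisson_centralPot_kinetic {f : ℝ → ℝ} {f' : ℝ} {i j : Fin N} {w : Phase N}
    (m : Fin N → ℝ) (hw : w.1 i ≠ w.1 j) (hf : HasDerivAt f f' ‖w.1 i - w.1 j‖) :
    poisson (centralPot f i j) (kinetic m) w =
      f' / ‖w.1 i - w.1 j‖ * ⟪w.1 i - w.1 j, relVel m i j w⟫ := by
  simp only [poisson_kinetic, gradPos_centralPot hw hf]
  simp only [real_inner_smul_left, sum_pairSign_mul, relVel, inner_sub_right, mul_sub]

lemma poisson_radialVel_centralPot {g : ℝ → ℝ} {g' : ℝ} {i' j' : Fin N} {w : Phase N}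
    (m : Fin N → ℝ) (a : ℝ → ℝ) (i j : Fin N) (hw : w.1 i' ≠ w.1 j')
    (hg : HasDerivAt g g' ‖w.1 i' - w.1 j'‖) :
    poisson (radialVel m a i j) (centralPot g i' j') w =
      -(pairSign i j i' / m i' - pairSign i j j' / m j') *
        (a ‖w.1 i - w.1 j‖ * (g' / ‖w.1 i' - w.1 j'‖) * ⟪w.1 i - w.1 j, w.1 i' - w.1 j'⟫) := by
  have hsum := sum_pairSign_mul i' j' fun l ↦ pairSign i j l / m l *
    (a ‖w.1 i - w.1 j‖ * (g' / ‖w.1 i' - w.1 j'‖) * ⟪w.1 i - w.1 j, w.1 i' - w.1 j'⟫)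
  rw [neg_mul, sub_mul, ← hsum, poisson_centralPot]
  congr 1
  refine Finset.sum_congr rfl fun l _ ↦ ?_
  simp only [gradMom_radialVel, gradPos_centralPot hw hg, real_inner_smul_left,
    real_inner_smul_right]
  ring

lemma poisson_radialVel_centralPot_self {g : ℝ → ℝ} {g' : ℝ} {i j : Fin N} {w : Phase N}
    (m : Fin N → ℝ) (a : ℝ → ℝ) (hw : w.1 i ≠ w.1 j) (hg : HasDerivAt g g' ‖w.1 i - w.1 j‖) :
    poisson (radialVel m a i j) (centralPot g i j) w =
      -((m i)⁻¹ + (m j)⁻¹) * (a ‖w.1 i - w.1 j‖ * g' * ‖w.1 i - w.1 j‖) := by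
  have hij : i ≠ j := ne_of_apply_ne w.1 hw
  have hr : ‖w.1 i - w.1 j‖ ≠ 0 := norm_sub_eq_zero_iff.not.mpr hw
  rw [poisson_radialVel_centralPot m a i j hw hg, real_inner_self_eq_norm_sq]
  simp only [pairSign, Pi.sub_apply, Pi.single_eq_same,
    Pi.single_eq_of_ne hij, Pi.single_eq_of_ne hij.symm]
  field_simp
  ring

lemma poisson_radialVel_centralPot_shared {g : ℝ → ℝ} {g' : ℝ} {i j k : Fin N} {w : Phase N}
    (m : Fin N → ℝ) (a : ℝ → ℝ) (hij : i ≠ j) (hjk : j ≠ k) (hw : w.1 i ≠ w.1 k)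
    (hg : HasDerivAt g g' ‖w.1 i - w.1 k‖) :
    poisson (radialVel m a i j) (centralPot g i k) w =
      -(m i)⁻¹ * (a ‖w.1 i - w.1 j‖ * (g' / ‖w.1 i - w.1 k‖) *
        ⟪w.1 i - w.1 j, w.1 i - w.1 k⟫) := by
  have hik : i ≠ k := ne_of_apply_ne w.1 hw
  rw [poisson_radialVel_centralPot m a i j hw hg]
  simp [pairSign, hij, hik.symm, hjk.symm]

lemma eventually_norm_sub {P : ℝ → Prop} {i j : Fin N} {w : Phase N}
    (hP : ∀ᶠ r in 𝓝 ‖w.1 i - w.1 j‖, P r) : ∀ᶠ z : Phase N in 𝓝 w, P ‖z.1 i - z.1 j‖ :=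
  have hcont : Continuous fun z : Phase N ↦ ‖z.1 i - z.1 j‖ := by fun_prop
  hcont.continuousAt.eventually hP

lemma eventually_position_ne {i j : Fin N} {w : Phase N} (hw : w.1 i ≠ w.1 j) :
    ∀ᶠ z : Phase N in 𝓝 w, z.1 i ≠ z.1 j :=
  have hi : Continuous fun z : Phase N ↦ z.1 i := by fun_prop
  have hj : Continuous fun z : Phase N ↦ z.1 j := by fun_prop
  (isOpen_ne_fun hi hj).mem_nhds hw

lemma poisson_centralPot_kinetic_eventuallyEq {f f' : ℝ → ℝ} {i j : Fin N} {w : Phase N}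
    (m : Fin N → ℝ) (hw : w.1 i ≠ w.1 j)
    (hf : ∀ᶠ r in 𝓝 ‖w.1 i - w.1 j‖, HasDerivAt f (f' r) r) :
    poisson (centralPot f i j) (kinetic m) =ᶠ[𝓝 w] radialVel m (fun r ↦ f' r / r) i j := by
  filter_upwards [eventually_position_ne hw, eventually_norm_sub hf] with z hz hfz
  exact poisson_centralPot_kinetic m hz hfz

lemma poisson_VTV_eventuallyEq {f f' : ℝ → ℝ} {i j : Fin N} {w : Phase N}
    (m : Fin N → ℝ) (hw : w.1 i ≠ w.1 j)
    (hf : ∀ᶠ r in 𝓝 ‖w.1 i - w.1 j‖, HasDerivAt f (f' r) r) :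
    poisson (poisson (centralPot f i j) (kinetic m)) (centralPot f i j) =ᶠ[𝓝 w]
      centralPot (fun r ↦ -((m i)⁻¹ + (m j)⁻¹) * f' r ^ 2) i j := by
  filter_upwards [poisson_eventuallyEq_left (poisson_centralPot_kinetic_eventuallyEq m hw hf)
    (centralPot f i j), eventually_position_ne hw, eventually_norm_sub hf] with z hVT hz hfz
  have hr : ‖z.1 i - z.1 j‖ ≠ 0 := norm_sub_eq_zero_iff.not.mpr hz
  rw [hVT, poisson_radialVel_centralPot_self m _ hz hfz, centralPot]
  field_simp

lemma poisson_VTVT_eventuallyEq {f f' f'' : ℝ → ℝ} {i j : Fin N} {w : Phase N}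
    (m : Fin N → ℝ) (hw : w.1 i ≠ w.1 j)
    (hf : ∀ᶠ r in 𝓝 ‖w.1 i - w.1 j‖, HasDerivAt f (f' r) r)
    (hf' : ∀ᶠ r in 𝓝 ‖w.1 i - w.1 j‖, HasDerivAt f' (f'' r) r) :
    poisson (poisson (poisson (centralPot f i j) (kinetic m)) (centralPot f i j)) (kinetic m)
      =ᶠ[𝓝 w] radialVel m (fun r ↦ -((m i)⁻¹ + (m j)⁻¹) * (2 * f' r * f'' r) / r) i j := by
  have hsq : ∀ᶠ r in 𝓝 ‖w.1 i - w.1 j‖, HasDerivAt (fun s ↦ -((m i)⁻¹ + (m j)⁻¹) * f' s ^ 2)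
      (-((m i)⁻¹ + (m j)⁻¹) * (2 * f' r * f'' r)) r :=
    hf'.mono fun r h ↦ by simpa using (h.pow 2).const_mul (-((m i)⁻¹ + (m j)⁻¹))
  exact (poisson_eventuallyEq_left (poisson_VTV_eventuallyEq m hw hf) (kinetic m)).trans
    (poisson_centralPot_kinetic_eventuallyEq m hw hsq)

theorem fourth_order_VTVTV_three_body_general {f f' f'' g : ℝ → ℝ} {g' : ℝ} {m : Fin N → ℝ}
    (hm : ∀ l, m l ≠ 0) {i j k : Fin N} (hjk : j ≠ k) {w : Phase N}
    (hwij : w.1 i ≠ w.1 j) (hwik : w.1 i ≠ w.1 k)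
    (hf : ∀ᶠ r in 𝓝 ‖w.1 i - w.1 j‖, HasDerivAt f (f' r) r)
    (hf' : ∀ᶠ r in 𝓝 ‖w.1 i - w.1 j‖, HasDerivAt f' (f'' r) r)
    (hg : HasDerivAt g g' ‖w.1 i - w.1 k‖) :
    poisson (poisson (poisson (poisson (centralPot f i j) (kinetic m))
        (centralPot f i j)) (kinetic m)) (centralPot g i k) w =
      2 * ((m i + m j) / (m i ^ 2 * m j)) *
        (f' ‖w.1 i - w.1 j‖ * f'' ‖w.1 i - w.1 j‖ / ‖w.1 i - w.1 j‖) *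
        (g' / ‖w.1 i - w.1 k‖) * ⟪w.1 i - w.1 j, w.1 i - w.1 k⟫ := by
  have hmi := hm i
  have hmj := hm j
  have hij : i ≠ j := ne_of_apply_ne w.1 hwij
  rw [poisson_congr_left (poisson_VTVT_eventuallyEq m hwij hf hf'),
    poisson_radialVel_centralPot_shared m _ hij hjk hwik hg]
  field_simp
  ring

lemma pairPot_eq_centralPot (G : ℝ) (m : Fin N → ℝ) (i j : Fin N) :
    pairPot G m i j = centralPot (fun r ↦ -(G * m i * m j) / r) i j :=
  rfl

end PhaseSpace

/-- Fourth-order three-body error term (paper eq. A18c):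
`{{{{V_ij,T},V_ij},T},V_ik}
  = −4 (G³ m_i m_j m_k (m_i + m_j) / (r_ij⁶ r_ik³)) (x_ij·x_ik)`. -/
theorem fourth_order_VTVTV_three_body {N : ℕ} (G : ℝ) (hG : 0 < G)
    (m : Fin N → ℝ) (hm : ∀ i, 0 < m i) (i j k : Fin N)
    (hij : i ≠ j) (hik : i ≠ k) (hjk : j ≠ k) (w : Phase N)
    (hrij : ‖w.1 i - w.1 j‖ ≠ 0) (hrik : ‖w.1 i - w.1 k‖ ≠ 0) :
    poisson (poisson (poisson (poisson (pairPot G m i j) (kinetic m))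
        (pairPot G m i j)) (kinetic m)) (pairPot G m i k) w =
      -4 * (G ^ 3 * m i * m j * m k * (m i + m j) /
          (‖w.1 i - w.1 j‖ ^ 6 * ‖w.1 i - w.1 k‖ ^ 3)) *
        ⟪w.1 i - w.1 j, w.1 i - w.1 k⟫ := by
  have hnear := eventually_ne_nhds hrij
  have hmi := (hm i).ne'
  have hmj := (hm j).ne'
  simp only [pairPot_eq_centralPot]
  rw [fourth_order_VTVTV_three_body_general (fun l ↦ (hm l).ne') hjk
    (norm_sub_eq_zero_iff.not.mp hrij) (norm_sub_eq_zero_iff.not.mp hrik)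
    (hnear.mono fun _ ↦ hasDerivAt_neg_const_div _)
    (hnear.mono fun _ ↦ hasDerivAt_const_div_sq _) (hasDerivAt_neg_const_div _ hrik)]
  field_simp
  ring
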